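/- arXiv:2604.05752 — 2 statements merged into one kernel-verified Lean document; each statement's English description precedes it below -/
import Mathlib

section
/- Let D ⊆ ℝ × ℝ be open with connected fibers D_x = {u : (x,u) ∈ D}, let φ : D → ℝ be twice continuously differentiable, and let κ : ℝ → ℝ satisfy 𝒦(x,u) = κ(x) for all (x,u) ∈ D. Then there exists a function c : ℝ → ℝ such that every solution f of u' = φ(x,u) on an interval I is twice differentiable and satisfies the non-homogeneous linear equation f''(x) + κ(x)·f(x) = c(x) for all x ∈ I. -/
/-- Partial derivative of `φ` with respect to the second (dependent) variable `u`. -/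
noncomputable def pderivU (φ : ℝ × ℝ → ℝ) (x u : ℝ) : ℝ :=
  deriv (fun v => φ (x, v)) u

/-- Partial derivative of `φ` with respect to the first (independent) variable `x`. -/
noncomputable def pderivX (φ : ℝ × ℝ → ℝ) (x u : ℝ) : ℝ :=
  deriv (fun t => φ (t, u)) x

/-- Mixed second partial derivative `∂ₓ∂ᵤφ`. -/
noncomputable def pderivXU (φ : ℝ × ℝ → ℝ) (x u : ℝ) : ℝ :=
  deriv (fun t => pderivU φ t u) x

/-- Second partial derivative `∂ᵤ∂ᵤφ`. -/
noncomputable def pderivUU (φ : ℝ × ℝ → ℝ) (x u : ℝ) : ℝ :=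
  deriv (fun v => pderivU φ x v) u

/-- The curvature `𝒦(x,u) := −(∂ₓ∂ᵤφ(x,u) + (∂ᵤφ(x,u))² + φ(x,u)·∂ᵤ∂ᵤφ(x,u))`
of the ODE `u' = φ(x,u)`. -/
noncomputable def curvature (φ : ℝ × ℝ → ℝ) (x u : ℝ) : ℝ :=
  -(pderivXU φ x u + (pderivU φ x u) ^ 2 + φ (x, u) * pderivUU φ x u)

/-!
Along a solution of `u' = φ(x, u)` the chain rule gives `f''(x) = A(x, f x)`, where
`A = ∂ₓφ + φ · ∂ᵤφ`. Differentiating `A` in `u` and exchanging the mixed partial derivatives gives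
`∂ᵤA = -𝒦`. If `𝒦 = κ(x)`, then `A + κ(x) u` is therefore constant on each connected fiber of `D`;
its value there is `c(x)`.
-/

open scoped Topology

section Calculus

variable {𝕜 E F : Type*} [NontriviallyNormedField 𝕜] [NormedAddCommGroup E] [NormedSpace 𝕜 E]
  [NormedAddCommGroup F] [NormedSpace 𝕜 F]

theorem hasDerivAt_prodMk_left (t : 𝕜) (y : F) : HasDerivAt (fun s => (s, y)) ((1 : 𝕜), 0) t :=
  (hasDerivAt_id t).prodMk (hasDerivAt_const t y)

theorem hasDerivAt_prodMk_right (y : E) (t : 𝕜) : HasDerivAt (fun s => (y, s)) (0, (1 : 𝕜)) t :=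
  (hasDerivAt_const t y).prodMk (hasDerivAt_id t)

theorem hasFDerivAt_fderiv_of_contDiffAt_two {f : E → F} {p : E} (hf : ContDiffAt 𝕜 2 f p) :
    HasFDerivAt (fderiv 𝕜 f) (fderiv 𝕜 (fderiv 𝕜 f) p) p :=
  ((hf.fderiv_right (m := 1) le_rfl).differentiableAt one_ne_zero).hasFDerivAt

end Calculus

section Acceleration

variable {F : Type*} [NormedAddCommGroup F] [NormedSpace ℝ F]

/-- The acceleration field `∂ₓφ + ∂ᵤφ · φ` of the ODE `u' = φ(x, u)`: the second derivative at `x`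
of a solution with value `u` at `x`. It is encoded as the derivative of `φ` at `(x, u)` in the
direction `(1, φ (x, u))` of the solution's graph. -/
noncomputable def odeAcceleration (φ : ℝ × F → F) (x : ℝ) (u : F) : F :=
  fderiv ℝ φ (x, u) (1, φ (x, u))

theorem hasDerivWithinAt_along_solution {φ : ℝ × F → F} {f : ℝ → F} {I : Set ℝ} {x : ℝ}
    (hφ : DifferentiableAt ℝ φ (x, f x)) (hf : HasDerivWithinAt f (φ (x, f x)) I x) :
    HasDerivWithinAt (fun t => φ (t, f t)) (odeAcceleration φ x (f x)) I x :=
  hφ.hasFDerivAt.comp_hasDerivWithinAt (f := fun t => (t, f t)) x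
    ((hasDerivWithinAt_id x I).prodMk hf)

theorem hasDerivWithinAt_derivWithin_of_solution {φ : ℝ × F → F} {f : ℝ → F} {I : Set ℝ}
    (hI : UniqueDiffOn ℝ I) (hf : ∀ x ∈ I, HasDerivWithinAt f (φ (x, f x)) I x) {x : ℝ}
    (hx : x ∈ I) (hφ : DifferentiableAt ℝ φ (x, f x)) :
    HasDerivWithinAt (derivWithin f I) (odeAcceleration φ x (f x)) I x :=
  (hasDerivWithinAt_along_solution hφ (hf x hx)).congr_of_mem
    (fun t ht => (hf t ht).derivWithin (hI t ht)) hx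

end Acceleration

section Curvature

variable {φ : ℝ × ℝ → ℝ} {x u : ℝ}

theorem pderivU_eq_fderiv (hφ : DifferentiableAt ℝ φ (x, u)) :
    pderivU φ x u = fderiv ℝ φ (x, u) (0, 1) :=
  (hφ.hasFDerivAt.comp_hasDerivAt u (hasDerivAt_prodMk_right x u)).deriv

theorem hasFDerivAt_pderivU (hφ : ContDiffAt ℝ 2 φ (x, u)) :
    HasFDerivAt (fun p : ℝ × ℝ => pderivU φ p.1 p.2)
      ((fderiv ℝ (fderiv ℝ φ) (x, u)).flip (0, 1)) (x, u) := by
  have hpderivU : (fun p : ℝ × ℝ => pderivU φ p.1 p.2) =ᶠ[𝓝 (x, u)]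
      fun p => fderiv ℝ φ p (0, 1) := by
    filter_upwards [hφ.eventually (by simp)] with p hp
    exact pderivU_eq_fderiv (hp.differentiableAt two_ne_zero)
  have hfderiv := (hasFDerivAt_fderiv_of_contDiffAt_two hφ).clm_apply
    (hasFDerivAt_const ((0 : ℝ), (1 : ℝ)) (x, u))
  simpa using hfderiv.congr_of_eventuallyEq hpderivU

theorem pderivXU_eq_fderiv_fderiv (hφ : ContDiffAt ℝ 2 φ (x, u)) :
    pderivXU φ x u = fderiv ℝ (fderiv ℝ φ) (x, u) (1, 0) (0, 1) :=
  ((hasFDerivAt_pderivU hφ).comp_hasDerivAt (f := fun t => (t, u)) x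
    (hasDerivAt_prodMk_left x u)).deriv

theorem pderivUU_eq_fderiv_fderiv (hφ : ContDiffAt ℝ 2 φ (x, u)) :
    pderivUU φ x u = fderiv ℝ (fderiv ℝ φ) (x, u) (0, 1) (0, 1) :=
  ((hasFDerivAt_pderivU hφ).comp_hasDerivAt u (hasDerivAt_prodMk_right x u)).deriv

theorem curvature_eq_fderiv (hφ : ContDiffAt ℝ 2 φ (x, u)) :
    curvature φ x u =
      -(fderiv ℝ (fderiv ℝ φ) (x, u) (0, 1) (1, φ (x, u)) + fderiv ℝ φ (x, u) (0, 1) ^ 2) := by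
  have hsymm : fderiv ℝ (fderiv ℝ φ) (x, u) (1, 0) (0, 1) =
      fderiv ℝ (fderiv ℝ φ) (x, u) (0, 1) (1, 0) :=
    (hφ.isSymmSndFDerivAt (by simp)).eq (1, 0) (0, 1)
  have hdirection : ((1, φ (x, u)) : ℝ × ℝ) = (1, 0) + φ (x, u) • (0, 1) := by simp
  rw [curvature, pderivXU_eq_fderiv_fderiv hφ, pderivUU_eq_fderiv_fderiv hφ,
    pderivU_eq_fderiv (hφ.differentiableAt two_ne_zero), hsymm, hdirection, map_add, map_smul,
    smul_eq_mul]
  ring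

theorem hasDerivAt_odeAcceleration (hφ : ContDiffAt ℝ 2 φ (x, u)) :
    HasDerivAt (odeAcceleration φ x) (-curvature φ x u) u := by
  have hφu : HasDerivAt (fun v => φ (x, v)) (fderiv ℝ φ (x, u) (0, 1)) u :=
    (hφ.differentiableAt two_ne_zero).hasFDerivAt.comp_hasDerivAt u (hasDerivAt_prodMk_right x u)
  have hfderiv : HasDerivAt (fun v => fderiv ℝ φ (x, v))
      (fderiv ℝ (fderiv ℝ φ) (x, u) (0, 1)) u :=
    (hasFDerivAt_fderiv_of_contDiffAt_two hφ).comp_hasDerivAt u (hasDerivAt_prodMk_right x u)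
  have hdirection : ((0, fderiv ℝ φ (x, u) (0, 1)) : ℝ × ℝ) =
      fderiv ℝ φ (x, u) (0, 1) • (0, 1) := by simp
  refine (hfderiv.clm_apply ((hasDerivAt_const u 1).prodMk hφu)).congr_deriv ?_
  rw [curvature_eq_fderiv hφ, hdirection, map_smul, smul_eq_mul]
  ring

theorem odeAcceleration_add_mul_eq_of_curvature_eq {s : Set ℝ} (hs : s.OrdConnected) {k : ℝ}
    (hφ : ∀ w ∈ s, ContDiffAt ℝ 2 φ (x, w)) (hk : ∀ w ∈ s, curvature φ x w = k) {v : ℝ}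
    (hu : u ∈ s) (hv : v ∈ s) :
    odeAcceleration φ x u + k * u = odeAcceleration φ x v + k * v := by
  have hderiv : ∀ w ∈ s, HasDerivWithinAt (fun w => odeAcceleration φ x w + k * w) 0 s w := by
    intro w hw
    have h := (hasDerivAt_odeAcceleration (hφ w hw)).add ((hasDerivAt_id w).const_mul k)
    exact (h.congr_deriv (by rw [hk w hw]; ring)).hasDerivWithinAt
  have hle := hs.convex.norm_image_sub_le_of_norm_hasDerivWithin_le hderiv
    (fun _ _ => norm_zero.le) hv hu
  rwa [zero_mul, norm_le_zero_iff, sub_eq_zero] at hle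

theorem exists_odeAcceleration_eq_sub_mul {D : Set (ℝ × ℝ)}
    (hfib : ∀ x : ℝ, Set.OrdConnected {u : ℝ | (x, u) ∈ D}) (hφ : ∀ p ∈ D, ContDiffAt ℝ 2 φ p)
    {κ : ℝ → ℝ} (hκ : ∀ x u : ℝ, (x, u) ∈ D → curvature φ x u = κ x) :
    ∃ c : ℝ → ℝ, ∀ x u : ℝ, (x, u) ∈ D → odeAcceleration φ x u = c x - κ x * u := by
  suffices ∀ x, ∃ c : ℝ, ∀ u, (x, u) ∈ D → odeAcceleration φ x u = c - κ x * u from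
    Classical.skolem.mp this
  intro x
  by_cases hne : ∃ v, (x, v) ∈ D
  · obtain ⟨v, hv⟩ := hne
    exact ⟨odeAcceleration φ x v + κ x * v, fun u hu => eq_sub_of_add_eq
      (odeAcceleration_add_mul_eq_of_curvature_eq (hfib x) (fun w hw => hφ (x, w) hw) (hκ x) hu hv)⟩
  · exact ⟨0, fun u hu => (hne ⟨u, hu⟩).elim⟩

end Curvature

/-- `UniqueDiffOn` admits every nondegenerate interval `I`, open or not, with one-sided derivatives
at the end points it contains. -/
theorem stmt_4_general (D : Set (ℝ × ℝ)) (hD : IsOpen D)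
    (hfib : ∀ x : ℝ, Set.OrdConnected {u : ℝ | (x, u) ∈ D})
    (φ : ℝ × ℝ → ℝ) (hφ : ContDiffOn ℝ 2 φ D)
    (κ : ℝ → ℝ) (hκ : ∀ x u : ℝ, (x, u) ∈ D → curvature φ x u = κ x) :
    ∃ c : ℝ → ℝ, ∀ (I : Set ℝ), UniqueDiffOn ℝ I → ∀ f : ℝ → ℝ,
      (∀ x ∈ I, (x, f x) ∈ D) → (∀ x ∈ I, HasDerivWithinAt f (φ (x, f x)) I x) →
      ∀ x ∈ I, HasDerivWithinAt (derivWithin f I) (c x - κ x * f x) I x := by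
  have hφD : ∀ p ∈ D, ContDiffAt ℝ 2 φ p := fun p hp => hφ.contDiffAt (hD.mem_nhds hp)
  obtain ⟨c, hc⟩ := exists_odeAcceleration_eq_sub_mul hfib hφD hκ
  refine ⟨c, fun I hI f hfD hf x hx => ?_⟩
  rw [← hc x (f x) (hfD x hx)]
  exact hasDerivWithinAt_derivWithin_of_solution hI hf hx
    ((hφD _ (hfD x hx)).differentiableAt two_ne_zero)

/-- If `D` has connected (order-connected) fibers and `𝒦(x,u) = κ(x)` on
`D`, then there is a function `c : ℝ → ℝ` such that every solution `f` of `u' = φ(x,u)` on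
an open interval is twice differentiable and satisfies `f'' + κ·f = c`. -/
theorem stmt_4 (D : Set (ℝ × ℝ)) (hD : IsOpen D)
    (hfib : ∀ x : ℝ, Set.OrdConnected {u : ℝ | (x, u) ∈ D})
    (φ : ℝ × ℝ → ℝ) (hφ : ContDiffOn ℝ 2 φ D)
    (κ : ℝ → ℝ) (hκ : ∀ x u : ℝ, (x, u) ∈ D → curvature φ x u = κ x) :
    ∃ c : ℝ → ℝ, ∀ (I : Set ℝ), IsOpen I → ∀ f : ℝ → ℝ,
      (∀ x ∈ I, (x, f x) ∈ D) → (∀ x ∈ I, HasDerivAt f (φ (x, f x)) x) →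
      ∀ x ∈ I, HasDerivAt (deriv f) (c x - κ x * f x) x := by
  obtain ⟨c, hc⟩ := stmt_4_general D hD hfib φ hφ κ hκ
  exact ⟨c, fun I hI f hfD hf x hx =>
    ((hc I hI.uniqueDiffOn f hfD (fun t ht => (hf t ht).hasDerivWithinAt) x hx).congr_of_mem
      (fun t ht => (derivWithin_of_isOpen hI ht).symm) hx).hasDerivAt (hI.mem_nhds hx)⟩
end

section
/- Let D ⊆ ℝ × ℝ be open, φ : D → ℝ twice continuously differentiable, and κ : ℝ → ℝ continuous with 𝒦(x,u) = κ(x) for all (x,u) ∈ D. Let f be a solution of u' = φ(x,u) on an interval I and fix x₀ ∈ I. Then the function δ(x) := exp(∫_{x₀}^{x} ∂ᵤφ(τ, f(τ)) dτ) is strictly positive, twice differentiable, and satisfies the Schrödinger equation δ''(x) + κ(x)·δ(x) = 0 for all x ∈ I. -/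
/-!
By the chain rule, `g(x) := ∂ᵤφ(x, f(x))` satisfies `g' = ∂ₓ∂ᵤφ + φ ∂ᵤ∂ᵤφ` along a solution `f`,
which is the Riccati equation `g' = -(𝒦(x, f(x)) + g²)`. The substitution `δ = exp (∫ g)`, for which
`δ' = δ g`, linearizes it: `δ'' = δ (g² + g') = -𝒦(x, f(x)) δ`.
-/

open Filter Set Topology

section PartialDerivatives

variable {𝕜 F : Type*} [NontriviallyNormedField 𝕜] [NormedAddCommGroup F] [NormedSpace 𝕜 F]

theorem deriv_fst_eq_fderiv_apply {ψ : 𝕜 × 𝕜 → F} {x u : 𝕜}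
    (hψ : DifferentiableAt 𝕜 ψ (x, u)) :
    deriv (fun t => ψ (t, u)) x = fderiv 𝕜 ψ (x, u) (1, 0) :=
  (hψ.hasFDerivAt.comp_hasDerivAt (f := fun t => (t, u)) x
    ((hasDerivAt_id x).prodMk (hasDerivAt_const x u))).deriv

theorem deriv_snd_eq_fderiv_apply {ψ : 𝕜 × 𝕜 → F} {x u : 𝕜}
    (hψ : DifferentiableAt 𝕜 ψ (x, u)) :
    deriv (fun v => ψ (x, v)) u = fderiv 𝕜 ψ (x, u) (0, 1) :=
  (hψ.hasFDerivAt.comp_hasDerivAt (f := fun v => (x, v)) u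
    ((hasDerivAt_const u x).prodMk (hasDerivAt_id u))).deriv

theorem hasDerivWithinAt_comp_graph {ψ : 𝕜 × 𝕜 → F} {f : 𝕜 → 𝕜} {f' x : 𝕜} {s : Set 𝕜}
    (hψ : DifferentiableAt 𝕜 ψ (x, f x)) (hf : HasDerivWithinAt f f' s x) :
    HasDerivWithinAt (fun t => ψ (t, f t))
      (deriv (fun t => ψ (t, f x)) x + f' • deriv (fun v => ψ (x, v)) (f x)) s x := by
  have hgraph : HasDerivWithinAt (fun t => (t, f t)) (1, f') s x :=
    (hasDerivWithinAt_id x s).prodMk hf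
  have hsplit : ((1, f') : 𝕜 × 𝕜) = (1, 0) + f' • (0, 1) := by simp
  rw [deriv_fst_eq_fderiv_apply hψ, deriv_snd_eq_fderiv_apply hψ, ← map_smul, ← map_add, ← hsplit]
  exact hψ.hasFDerivAt.comp_hasDerivWithinAt (f := fun t => (t, f t)) x hgraph

end PartialDerivatives

theorem contDiffAt_pderivU {φ : ℝ × ℝ → ℝ} {n : ℕ} {p : ℝ × ℝ}
    (hφ : ContDiffAt ℝ (n + 1) φ p) :
    ContDiffAt ℝ n (fun q : ℝ × ℝ => pderivU φ q.1 q.2) p := by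
  have hfderiv : ContDiffAt ℝ n (fun q => fderiv ℝ φ q (0, 1)) p :=
    hφ.fderiv_right_succ.clm_apply contDiffAt_const
  refine hfderiv.congr_of_eventuallyEq ?_
  filter_upwards [hφ.eventually (by simp)] with q hq
  exact deriv_snd_eq_fderiv_apply (hq.differentiableAt (by simp))

theorem hasDerivWithinAt_pderivU_along_solution {φ : ℝ × ℝ → ℝ} {f : ℝ → ℝ} {s : Set ℝ} {x : ℝ}
    (hφ : DifferentiableAt ℝ (fun q : ℝ × ℝ => pderivU φ q.1 q.2) (x, f x))
    (hf : HasDerivWithinAt f (φ (x, f x)) s x) :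
    HasDerivWithinAt (fun t => pderivU φ t (f t))
      (-(curvature φ x (f x) + pderivU φ x (f x) ^ 2)) s x := by
  refine (hasDerivWithinAt_comp_graph hφ hf).congr_deriv ?_
  simp only [curvature, pderivXU, pderivUU, smul_eq_mul]
  ring

section ExpIntegral

variable {I : Set ℝ} {x₀ x : ℝ}

theorem ftcFilter_nhdsWithin_of_ordConnected (hI : I.OrdConnected) (hx : x ∈ I) :
    intervalIntegral.FTCFilter x (𝓝[I] x) (𝓝[I] x) :=
  have : TendstoIxxClass Ioc (𝓟 I) (𝓟 I) :=
    tendstoIxxClass_principal.2 fun _ ha _ hb => Ioc_subset_Icc_self.trans (hI.out ha hb)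
  have : (𝓝[I] x).IsMeasurablyGenerated := hI.measurableSet.nhdsWithin_isMeasurablyGenerated x
  { pure_le := pure_le_nhdsWithin hx
    le_nhds := inf_le_left }

theorem hasDerivWithinAt_integral_of_ordConnected {E : Type*} [NormedAddCommGroup E]
    [NormedSpace ℝ E] [CompleteSpace E] {g : ℝ → E} (hI : I.OrdConnected)
    (hg : ContinuousOn g I) (hx₀ : x₀ ∈ I) (hx : x ∈ I) :
    HasDerivWithinAt (fun t => ∫ τ in x₀..t, g τ) (g x) I x := by
  have := ftcFilter_nhdsWithin_of_ordConnected hI hx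
  exact intervalIntegral.integral_hasDerivWithinAt_right
    (hg.mono (hI.uIcc_subset hx₀ hx)).intervalIntegrable
    (hg.stronglyMeasurableAtFilter_nhdsWithin hI.measurableSet x) (hg x hx)

theorem hasDerivWithinAt_exp_integral {g : ℝ → ℝ} (hI : I.OrdConnected)
    (hg : ContinuousOn g I) (hx₀ : x₀ ∈ I) (hx : x ∈ I) :
    HasDerivWithinAt (fun t => Real.exp (∫ τ in x₀..t, g τ))
      (Real.exp (∫ τ in x₀..x, g τ) * g x) I x :=
  (hasDerivWithinAt_integral_of_ordConnected hI hg hx₀ hx).exp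

theorem hasDerivWithinAt_exp_integral_mul_of_riccati {g : ℝ → ℝ} {q : ℝ} (hI : I.OrdConnected)
    (hg : ContinuousOn g I) (hx₀ : x₀ ∈ I) (hx : x ∈ I)
    (hriccati : HasDerivWithinAt g (-(q + g x ^ 2)) I x) :
    HasDerivWithinAt (fun t => Real.exp (∫ τ in x₀..t, g τ) * g t)
      (-(q * Real.exp (∫ τ in x₀..x, g τ))) I x :=
  ((hasDerivWithinAt_exp_integral hI hg hx₀ hx).mul hriccati).congr_deriv (by ring)

end ExpIntegral

theorem stmt_9_general {φ : ℝ × ℝ → ℝ} {I : Set ℝ} (hI : I.OrdConnected) {f : ℝ → ℝ}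
    (hφ : ∀ x ∈ I, ContDiffAt ℝ 2 φ (x, f x))
    (hf : ∀ x ∈ I, HasDerivWithinAt f (φ (x, f x)) I x) {x₀ : ℝ} (hx₀ : x₀ ∈ I) :
    (∀ x : ℝ, 0 < Real.exp (∫ τ in x₀..x, pderivU φ τ (f τ))) ∧
    ∃ δ' : ℝ → ℝ,
      (∀ x ∈ I, HasDerivWithinAt (fun t => Real.exp (∫ τ in x₀..t, pderivU φ τ (f τ)))
        (δ' x) I x) ∧
      (∀ x ∈ I, HasDerivWithinAt δ'
        (-(curvature φ x (f x) * Real.exp (∫ τ in x₀..x, pderivU φ τ (f τ)))) I x) := by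
  have hriccati : ∀ x ∈ I, HasDerivWithinAt (fun t => pderivU φ t (f t))
      (-(curvature φ x (f x) + pderivU φ x (f x) ^ 2)) I x := fun x hx =>
    hasDerivWithinAt_pderivU_along_solution
      ((contDiffAt_pderivU (n := 1) (hφ x hx)).differentiableAt (by simp)) (hf x hx)
  have hcont : ContinuousOn (fun t => pderivU φ t (f t)) I :=
    HasDerivWithinAt.continuousOn hriccati
  exact ⟨fun _ => Real.exp_pos _,
    fun t => Real.exp (∫ τ in x₀..t, pderivU φ τ (f τ)) * pderivU φ t (f t),
    fun _ hx => hasDerivWithinAt_exp_integral hI hcont hx₀ hx,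
    fun x hx => hasDerivWithinAt_exp_integral_mul_of_riccati hI hcont hx₀ hx (hriccati x hx)⟩

/-- If `𝒦(x,u) = κ(x)` on `D` with `κ` continuous, `f` solves
`u' = φ(x,u)` on an open interval `I` and `x₀ ∈ I`, then
`δ(x) := exp(∫_{x₀}^{x} ∂ᵤφ(τ, f(τ)) dτ)` is strictly positive, twice differentiable on
`I`, and satisfies `δ'' + κ·δ = 0` on `I`. -/
theorem stmt_9 (D : Set (ℝ × ℝ)) (hD : IsOpen D)
    (φ : ℝ × ℝ → ℝ) (hφ : ContDiffOn ℝ 2 φ D)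
    (κ : ℝ → ℝ) (hκcont : Continuous κ)
    (hκ : ∀ x u : ℝ, (x, u) ∈ D → curvature φ x u = κ x)
    (I : Set ℝ) (hI : IsOpen I) (hIconn : IsPreconnected I)
    (f : ℝ → ℝ)
    (hfD : ∀ x ∈ I, (x, f x) ∈ D)
    (hf : ∀ x ∈ I, HasDerivAt f (φ (x, f x)) x)
    (x₀ : ℝ) (hx₀ : x₀ ∈ I) :
    (∀ x : ℝ, 0 < Real.exp (∫ τ in x₀..x, pderivU φ τ (f τ))) ∧
    ∃ δ' : ℝ → ℝ,
      (∀ x ∈ I, HasDerivAt (fun t => Real.exp (∫ τ in x₀..t, pderivU φ τ (f τ)))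
        (δ' x) x) ∧
      (∀ x ∈ I, HasDerivAt δ'
        (-(κ x * Real.exp (∫ τ in x₀..x, pderivU φ τ (f τ)))) x) := by
  obtain ⟨hpos, δ', hδ, hδ'⟩ := stmt_9_general hIconn.ordConnected
    (fun x hx => hφ.contDiffAt (hD.mem_nhds (hfD x hx)))
    (fun x hx => (hf x hx).hasDerivWithinAt) hx₀
  exact ⟨hpos, δ', fun x hx => (hδ x hx).hasDerivAt (hI.mem_nhds hx), fun x hx =>
    hκ x (f x) (hfD x hx) ▸ (hδ' x hx).hasDerivAt (hI.mem_nhds hx)⟩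
end
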